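/- Let (R, 𝒜, χ) be a measure space and g : R × ℝ → ℝ a function such that r ↦ g(r,α) is measurable for every α ∈ ℝ and α ↦ g(r,α) is continuous for every r ∈ R. Let f : R → ℝ be measurable and assume that r ↦ sup_{β ∈ [−1,1]} |g(r, β f(r))| is χ-integrable. Then ∫_R sup_{β ∈ [−1,1]} g(r, β f(r)) χ(dr) = sup { ∫_R g(r, γ(r) f(r)) χ(dr) : γ : R → [−1,1] a measurable simple function }. -/

import Mathlib

open MeasureTheory

/-!
A maximiser over a finite set of parameters can be chosen measurably, and with finitely many values,
by comparing the parameters one at a time. Exhausting a countable dense set of parameters by finite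
sets yields simple functions along which the integrand converges pointwise to its supremum, because
a lower semicontinuous function has the same supremum over a dense set as over the whole space.
Dominated convergence carries this over to the integrals.
-/

open Filter Topology Set

section PointwiseSupremum

variable {R K β : Type*} [MeasurableSpace R] [TopologicalSpace β]

theorem exists_simpleFunc_forall_isMaxOn [Nonempty K] [LinearOrder β] [OrderClosedTopology β]
    [SecondCountableTopology β] [MeasurableSpace β] [OpensMeasurableSpace β] {h : R → K → β}
    (hmeas : ∀ k, Measurable fun r => h r k) {t : Set K} (ht : t.Finite) :
    ∃ γ : SimpleFunc R K, ∀ r, IsMaxOn (h r) t (γ r) := by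
  classical
  induction t, ht using Set.Finite.induction_on with
  | empty => exact ⟨SimpleFunc.const R (Classical.arbitrary K), fun _ _ => False.elim⟩
  | @insert k t _ _ ih =>
    obtain ⟨γ, hγ⟩ := ih
    have improved : MeasurableSet {r | h r (γ r) < h r k} :=
      measurableSet_lt (γ.measurable_bind (fun k r => h r k) hmeas) (hmeas k)
    refine ⟨SimpleFunc.piecewise _ improved (SimpleFunc.const R k) γ, fun r => ?_⟩
    rw [isMaxOn_iff, forall_mem_insert]
    by_cases hr : h r (γ r) < h r k
    · simpa [hr] using fun j hj => (isMaxOn_iff.1 (hγ r) j hj).trans hr.le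
    · simpa [hr] using ⟨not_lt.1 hr, isMaxOn_iff.1 (hγ r)⟩

variable [TopologicalSpace K] [ConditionallyCompleteLinearOrder β] [OrderTopology β]

theorem tendsto_ciSup_of_forall_mem_dense [Nonempty K] {ι : Type*} {l : Filter ι} {φ : K → β}
    (hφ : LowerSemicontinuous φ) (hbdd : BddAbove (range φ)) {D : Set K} (hD : Dense D)
    {x : ι → K} (hx : ∀ k ∈ D, ∀ᶠ i in l, φ k ≤ φ (x i)) :
    Tendsto (fun i => φ (x i)) l (𝓝 (⨆ k, φ k)) := by
  refine tendsto_order.2 ⟨fun a ha => ?_, fun a ha =>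
    .of_forall fun i => (le_ciSup hbdd (x i)).trans_lt ha⟩
  obtain ⟨k, hkD, hak⟩ : ∃ k ∈ D, a < φ k :=
    hD.exists_mem_open (hφ.isOpen_preimage a) (exists_lt_of_lt_ciSup ha)
  filter_upwards [hx k hkD] with i hi using hak.trans_le hi

theorem exists_seq_simpleFunc_tendsto_ciSup [TopologicalSpace.SeparableSpace K] [Nonempty K]
    [SecondCountableTopology β] [MeasurableSpace β] [OpensMeasurableSpace β] {h : R → K → β}
    (hmeas : ∀ k, Measurable fun r => h r k) :
    ∃ γ : ℕ → SimpleFunc R K, ∀ r, LowerSemicontinuous (h r) → BddAbove (range (h r)) →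
      Tendsto (fun n => h r (γ n r)) atTop (𝓝 (⨆ k, h r k)) := by
  let d := TopologicalSpace.denseSeq K
  have hd : Dense (range d) := TopologicalSpace.denseRange_denseSeq K
  choose γ hγ using fun n =>
    exists_simpleFunc_forall_isMaxOn hmeas ((finite_Iic n).image d)
  refine ⟨γ, fun r hlsc hbdd => tendsto_ciSup_of_forall_mem_dense hlsc hbdd hd ?_⟩
  rintro _ ⟨m, rfl⟩
  filter_upwards [eventually_ge_atTop m] with n hmn
  exact hγ n r (mem_image_of_mem d hmn)

end PointwiseSupremum

theorem integral_sup_eq_sup_integral_simple_general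
    {R K : Type*} [MeasurableSpace R] [TopologicalSpace K] [TopologicalSpace.SeparableSpace K]
    [Nonempty K] {χ : Measure R} {h : R → K → ℝ} {F : R → ℝ}
    (hmeas : ∀ k, Measurable fun r => h r k) (hlsc : ∀ᵐ r ∂χ, LowerSemicontinuous (h r))
    (hF : Integrable F χ) (hbound : ∀ᵐ r ∂χ, ∀ k, |h r k| ≤ F r) :
    ∫ r, ⨆ k, h r k ∂χ = ⨆ γ : SimpleFunc R K, ∫ r, h r (γ r) ∂χ := by
  have hbdd : ∀ᵐ r ∂χ, BddAbove (range (h r)) := hbound.mono fun r hr =>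
    ⟨F r, forall_mem_range.2 fun k => (le_abs_self _).trans (hr k)⟩
  have aesm (γ : SimpleFunc R K) : AEStronglyMeasurable (fun r => h r (γ r)) χ :=
    (γ.measurable_bind (fun k r => h r k) hmeas).aestronglyMeasurable
  have norm_le (γ : SimpleFunc R K) : ∀ᵐ r ∂χ, ‖h r (γ r)‖ ≤ F r :=
    hbound.mono fun r hr => hr (γ r)
  obtain ⟨γ, hγ⟩ := exists_seq_simpleFunc_tendsto_ciSup hmeas
  have tendsto_sup : ∀ᵐ r ∂χ, Tendsto (fun n => h r (γ n r)) atTop (𝓝 (⨆ k, h r k)) := by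
    filter_upwards [hlsc, hbdd] with r using hγ r
  have integrable_sup : Integrable (fun r => ⨆ k, h r k) χ := by
    refine hF.mono' (aestronglyMeasurable_of_tendsto_ae atTop (fun n => aesm (γ n)) tendsto_sup) ?_
    filter_upwards [tendsto_sup, hbound] with r hlim hr
    exact le_of_tendsto' hlim.norm fun n => hr (γ n r)
  have tendsto_integral : Tendsto (fun n => ∫ r, h r (γ n r) ∂χ) atTop
      (𝓝 (∫ r, ⨆ k, h r k ∂χ)) :=
    tendsto_integral_of_dominated_convergence F (fun n => aesm (γ n)) hF
      (fun n => norm_le (γ n)) tendsto_sup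
  have isLUB : IsLUB (range fun γ : SimpleFunc R K => ∫ r, h r (γ r) ∂χ)
      (∫ r, ⨆ k, h r k ∂χ) := by
    refine ⟨forall_mem_range.2 fun η => ?_, fun b hb =>
      le_of_tendsto' tendsto_integral fun n => hb (mem_range_self (γ n))⟩
    exact integral_mono_ae (hF.mono' (aesm η) (norm_le η)) integrable_sup
      (hbdd.mono fun r hr => le_ciSup hr (η r))
  exact (isLUB.csSup_eq ⟨_, mem_range_self (γ 0)⟩).symm

theorem setOf_exists_simpleFunc_mem_eq_range {R E α : Type*} [MeasurableSpace R] (s : Set E)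
    (Φ : (R → E) → α) :
    {y | ∃ γ : SimpleFunc R E, (∀ r, γ r ∈ s) ∧ y = Φ γ} =
      range fun γ : SimpleFunc R s => Φ fun r => γ r := by
  ext y
  constructor
  · rintro ⟨γ, hγ, rfl⟩
    refine ⟨⟨fun r => ⟨γ r, hγ r⟩, fun x => ?_, ?_⟩, rfl⟩
    · simpa only [preimage, mem_singleton_iff, Subtype.ext_iff] using γ.measurableSet_fiber x
    · refine Finite.of_finite_image ?_ Subtype.val_injective.injOn
      rw [← range_comp]
      exact γ.finite_range
  · rintro ⟨γ, rfl⟩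
    exact ⟨γ.map (↑), fun r => (γ r).2, rfl⟩

/-- Lemma 3.6: for a Carathéodory function `g` and measurable `f` with integrable
majorant `r ↦ sup_{|β|≤1} |g(r, βf(r))|`, the integral of the pointwise supremum
`sup_{|β|≤1} g(r, βf(r))` equals the supremum of the integrals `∫ g(r, γ(r)f(r)) dχ`
over all measurable simple functions `γ` with values in `[−1,1]`. -/
theorem integral_sup_eq_sup_integral_simple
    {R : Type*} [MeasurableSpace R] (χ : Measure R)
    (g : R → ℝ → ℝ)
    (hmeas : ∀ α : ℝ, Measurable fun r => g r α)
    (hcont : ∀ r : R, Continuous fun α => g r α)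
    (f : R → ℝ) (hf : Measurable f)
    (hint : Integrable (fun r => ⨆ β : Set.Icc (-1 : ℝ) 1, |g r (β * f r)|) χ) :
    ∫ r, (⨆ β : Set.Icc (-1 : ℝ) 1, g r (β * f r)) ∂χ
      = sSup {y : ℝ | ∃ γ : SimpleFunc R ℝ,
          (∀ r, γ r ∈ Set.Icc (-1 : ℝ) 1) ∧ y = ∫ r, g r (γ r * f r) ∂χ} := by
  have : Nonempty (Icc (-1 : ℝ) 1) := ⟨⟨0, by norm_num⟩⟩
  have hcont' (r : R) : Continuous fun β : Icc (-1 : ℝ) 1 => g r (β * f r) :=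
    (hcont r).comp (by fun_prop)
  have hmeas' (β : Icc (-1 : ℝ) 1) : Measurable fun r => g r (β * f r) :=
    (measurable_uncurry_of_continuous_of_measurable (u := fun α r => g r α) hcont hmeas).comp
      ((hf.const_mul (β : ℝ)).prodMk measurable_id)
  rw [setOf_exists_simpleFunc_mem_eq_range (Icc (-1 : ℝ) 1)
    fun γ => ∫ r, g r (γ r * f r) ∂χ]
  exact integral_sup_eq_sup_integral_simple_general hmeas'
    (.of_forall fun r => (hcont' r).lowerSemicontinuous) hint
    (.of_forall fun r => le_ciSup (isCompact_range (hcont' r).abs).bddAbove)
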